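/- arXiv:0911.3788 — 4 statements merged into one kernel-verified Lean document; each statement's English description precedes it below -/
import Mathlib

section
/- Anderson's lemma (convex sets): if C and K are symmetric convex Borel subsets of ℝ^d, then for all x ∈ ℝ^d, the Lebesgue measure of (C − x) ∩ K is at most the Lebesgue measure of C ∩ K. -/
open MeasureTheory

/-- One-dimensional Brunn-Minkowski inequality, midpoint form. -/
lemma bm_one (A B S : Set ℝ) (hA : MeasurableSet A) (hB : MeasurableSet B) (hS : MeasurableSet S)
    (hAn : A.Nonempty) (hBn : B.Nonempty)
    (h : ∀ a ∈ A, ∀ b ∈ B, 2⁻¹ * (a + b) ∈ S) :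
    volume A + volume B ≤ 2 * volume S := by
  have scale : ∀ (T : Set ℝ) (b : ℝ),
      volume ((fun x => x + b) ⁻¹' ((fun x => 2⁻¹ * x) ⁻¹' T)) = 2 * volume T := by
    intro T b
    rw [measure_preimage_add_right, Real.volume_preimage_mul_left (by norm_num)]
    norm_num
  have key : ∀ K ⊆ A, IsCompact K → K.Nonempty → ∀ L ⊆ B, IsCompact L → L.Nonempty →
      volume K + volume L ≤ 2 * volume S := by
    intro K hKA hK hKn L hLB hL hLn
    have ha := hK.sSup_mem hKn
    have hb := hL.sInf_mem hLn
    set a := sSup K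
    set b := sInf L
    set m := 2⁻¹ * (a + b)
    have h1 : volume K ≤ 2 * volume (S ∩ Set.Iic m) := by
      rw [← scale _ b]
      apply measure_mono
      intro k hk
      refine ⟨h k (hKA hk) b (hLB hb), ?_⟩
      have := le_csSup hK.bddAbove hk
      simp only [Set.mem_Iic, m]
      linarith
    have h2 : volume L ≤ 2 * volume (S ∩ Set.Ici m) := by
      rw [← scale _ a]
      apply measure_mono
      intro k hk
      refine ⟨by simpa [add_comm] using h a (hKA ha) k (hLB hk), ?_⟩
      have := csInf_le hL.bddBelow hk
      simp only [Set.mem_Ici, m]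
      linarith
    have h3 : volume (S ∩ Set.Ici m) = volume (S \ Set.Iic m) := by
      apply measure_congr
      have : S \ Set.Iic m = S ∩ Set.Ioi m := by
        ext x; simp
      rw [this]
      exact (Filter.EventuallyEq.refl _ _).inter Ioi_ae_eq_Ici.symm
    calc _ ≤ 2 * volume (S ∩ Set.Iic m) + 2 * volume (S \ Set.Iic m) := by
          rw [← h3]; exact add_le_add h1 h2
      _ = _ := by rw [← mul_add, measure_inter_add_sdiff _ measurableSet_Iic]
  have key2 : ∀ K ⊆ A, IsCompact K → ∀ L ⊆ B, IsCompact L →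
      volume K + volume L ≤ 2 * volume S := by
    intro K hKA hK L hLB hL
    obtain ⟨a, ha⟩ := hAn
    obtain ⟨b, hb⟩ := hBn
    refine le_trans (add_le_add (measure_mono (Set.subset_insert a K))
      (measure_mono (Set.subset_insert b L))) ?_
    exact key _ (Set.insert_subset ha hKA) (hK.insert a) (Set.insert_nonempty _ _)
      _ (Set.insert_subset hb hLB) (hL.insert b) (Set.insert_nonempty _ _)
  rw [hA.measure_eq_iSup_isCompact, hB.measure_eq_iSup_isCompact]
  simp only [iSup_and']
  exact ENNReal.biSup_add_biSup_le' (p := fun K => K ⊆ A ∧ IsCompact K)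
    (q := fun K => K ⊆ B ∧ IsCompact K) ⟨∅, by simp⟩ ⟨∅, by simp⟩
    (fun K hK L hL => key2 K hK.1 hK.2 L hL.1 hL.2)

lemma pl_real (f g h : ℝ → ℝ) (hf : Measurable f) (hg : Measurable g) (hh : Measurable h)
    (f0 : ∀ x, 0 ≤ f x) (g0 : ∀ x, 0 ≤ g x) (h0 : ∀ x, 0 ≤ h x)
    (f1 : ∀ x, f x ≤ 1) (g1 : ∀ x, g x ≤ 1)
    (fs : ∀ t < 1, ∃ x, t < f x) (gs : ∀ t < 1, ∃ x, t < g x)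
    (H : ∀ x y, f x * g y ≤ h (2⁻¹ * (x + y)) ^ 2) :
    (∫⁻ x, ENNReal.ofReal (f x)) + (∫⁻ x, ENNReal.ofReal (g x))
      ≤ 2 * ∫⁻ x, ENNReal.ofReal (h x) := by
  have anti : ∀ u : ℝ → ℝ, Measurable fun t : ℝ => volume {x | t < u x} := by
    intro u
    apply Antitone.measurable
    intro s t hst
    exact measure_mono fun x hx => lt_of_le_of_lt hst hx
  rw [lintegral_eq_lintegral_meas_lt _ (.of_forall f0) hf.aemeasurable,
    lintegral_eq_lintegral_meas_lt _ (.of_forall g0) hg.aemeasurable,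
    lintegral_eq_lintegral_meas_lt _ (.of_forall h0) hh.aemeasurable,
    ← lintegral_add_left (anti f), ← lintegral_const_mul _ (anti h)]
  refine setLIntegral_mono' measurableSet_Ioi fun t ht => ?_
  have ht : 0 < t := ht
  rcases lt_or_ge t 1 with h1 | h1
  · refine bm_one _ _ _ (measurableSet_lt measurable_const hf)
      (measurableSet_lt measurable_const hg) (measurableSet_lt measurable_const hh)
      (fs t h1) (gs t h1) ?_
    intro a ha b hb
    have ha : t < f a := ha
    have hb : t < g b := hb
    show t < h _
    refine lt_of_pow_lt_pow_left₀ 2 (h0 _) (lt_of_lt_of_le ?_ (H a b))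
    nlinarith
  · have e1 : {x | t < f x} = ∅ := by
      ext x; simpa using (f1 x).trans h1
    have e2 : {x | t < g x} = ∅ := by
      ext x; simpa using (g1 x).trans h1
    simp [e1, e2]

lemma amgm (F G H : ENNReal) (h : F + G ≤ 2 * H) : F * G ≤ H ^ 2 := by
  by_cases hH : H = ⊤
  · simp [hH]
  have h2 : 2 * H ≠ ⊤ := ENNReal.mul_ne_top (by simp) hH
  have hs := ne_top_of_le_ne_top h2 h
  have hF : F ≠ ⊤ := fun h => by simp [h] at hs
  have hG : G ≠ ⊤ := fun h => by simp [h] at hs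
  lift F to NNReal using hF
  lift G to NNReal using hG
  lift H to NNReal using hH
  norm_cast at h ⊢
  have h' : (F : ℝ) + G ≤ 2 * H := by exact_mod_cast h
  have : (F : ℝ) * G ≤ H ^ 2 := by
    nlinarith [sq_nonneg ((F : ℝ) - G), F.2, G.2, H.2,
      mul_self_le_mul_self (by positivity : (0:ℝ) ≤ F + G) h']
  exact_mod_cast this

lemma pl_bdd (f g h : ℝ → ENNReal) (hf : Measurable f) (hg : Measurable g) (hh : Measurable h)
    (M : ENNReal) (hM : M ≠ ⊤) (fM : ∀ x, f x ≤ M) (gM : ∀ x, g x ≤ M)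
    (H : ∀ x y, f x * g y ≤ h (2⁻¹ * (x + y)) ^ 2) :
    (∫⁻ x, f x) * (∫⁻ x, g x) ≤ (∫⁻ x, h x) ^ 2 := by
  have red : ∀ u : ℝ → ENNReal, Measurable u → (∀ x, u x ≤ M) → (∫⁻ x, u x) ≠ 0 →
      ∃ (P : ENNReal) (v : ℝ → ℝ), P ≠ 0 ∧ P ≠ ⊤ ∧ Measurable v ∧ (∀ x, 0 ≤ v x) ∧
        (∀ x, v x ≤ 1) ∧ (∀ t < 1, ∃ x, t < v x) ∧ ∀ x, u x = P * ENNReal.ofReal (v x) := by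
    intro u hu uM u0
    have hP : (⨆ x, u x) ≠ ⊤ := ne_top_of_le_ne_top hM (iSup_le uM)
    have hP0 : (⨆ x, u x) ≠ 0 := by
      intro h
      apply u0
      have : ∀ x, u x = 0 := by simpa using h
      simp [this]
    have hle : ∀ x, u x ≤ ⨆ x, u x := fun x => le_iSup u x
    have hlt : ∀ b < ⨆ x, u x, ∃ x, b < u x := fun b hb => lt_iSup_iff.1 hb
    generalize (⨆ x, u x) = P at *
    have hd : ∀ x, u x / P ≠ ⊤ := fun x =>
      ne_top_of_le_ne_top ENNReal.one_ne_top (ENNReal.div_le_of_le_mul (by simpa using hle x))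
    refine ⟨P, fun x => (u x / P).toReal, hP0, hP, (hu.div_const P).ennreal_toReal,
      fun x => ENNReal.toReal_nonneg, ?_, ?_, ?_⟩
    · intro x
      refine ENNReal.toReal_le_of_le_ofReal zero_le_one ?_
      simpa using (ENNReal.div_le_of_le_mul (by simpa using hle x))
    · intro t ht
      obtain ⟨x, hx⟩ := hlt (ENNReal.ofReal t * P) (by
        conv_rhs => rw [← one_mul P]
        refine ENNReal.mul_lt_mul_left hP0 hP ?_
        simpa using ht)
      refine ⟨x, ?_⟩
      rcases lt_or_ge t 0 with h | h
      · exact h.trans_le ENNReal.toReal_nonneg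
      rw [← ENNReal.ofReal_lt_iff_lt_toReal h (hd x)]
      exact (ENNReal.lt_div_iff_mul_lt (.inl hP0) (.inl hP)).2 hx
    · intro x
      rw [ENNReal.ofReal_toReal (hd x), ENNReal.mul_div_cancel hP0 hP]
  by_cases hF : (∫⁻ x, f x) = 0
  · simp [hF]
  by_cases hG : (∫⁻ x, g x) = 0
  · simp [hG]
  obtain ⟨P, v, P0, PT, vm, v0, v1, vs, hv⟩ := red f hf fM hF
  obtain ⟨Q, w, Q0, QT, wm, w0, w1, ws, hw⟩ := red g hg gM hG
  obtain ⟨c, hc⟩ : ∃ c : ENNReal, c ^ 2 = P * Q :=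
    ⟨(P * Q) ^ (1 / 2 : ℝ), by rw [← ENNReal.rpow_natCast, ← ENNReal.rpow_mul]; simp⟩
  have c0 : c ≠ 0 := by
    rintro rfl
    simp [P0, Q0] at hc
  have cT : c ≠ ⊤ := by
    rintro rfl
    exact ENNReal.mul_ne_top PT QT (by rw [← hc]; simp)
  set k : ℝ → ENNReal := fun x => min (h x / c) 1
  have kT : ∀ x, k x ≠ ⊤ := fun x => ne_top_of_le_ne_top ENNReal.one_ne_top (min_le_right _ _)
  have km : Measurable k := (hh.div_const c).min measurable_const
  have main := pl_real v w (fun x => (k x).toReal) vm wm km.ennreal_toReal v0 w0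
    (fun _ => ENNReal.toReal_nonneg) v1 w1 vs ws (by
      intro x y
      have hxy := H x y
      rw [hv, hw] at hxy
      generalize 2⁻¹ * (x + y) = z at hxy
      have e : ENNReal.ofReal (v x * w y) ≤ k z ^ 2 := by
        rcases le_total (h z / c) 1 with hz | hz
        · have : k z = h z / c := min_eq_left hz
          rw [this, ENNReal.ofReal_mul (v0 x)]
          have hz' : h z = c * (h z / c) := (ENNReal.mul_div_cancel c0 cT).symm
          rw [hz', mul_pow, hc, mul_mul_mul_comm] at hxy
          exact (ENNReal.mul_le_mul_iff_right (mul_ne_zero P0 Q0) (ENNReal.mul_ne_top PT QT)).1 hxy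
        · have : k z = 1 := min_eq_right hz
          rw [this]
          simpa using mul_le_one₀ (v1 x) (w0 y) (w1 y)
      have := (ENNReal.ofReal_le_iff_le_toReal (by simp [kT])).1 e
      simpa using this)
  simp only [ENNReal.ofReal_toReal (kT _)] at main
  have main2 := amgm _ _ _ main
  have hk : c * ∫⁻ x, k x ≤ ∫⁻ x, h x := by
    rw [← lintegral_const_mul _ km]
    refine lintegral_mono fun x => ?_
    calc c * k x ≤ c * (h x / c) := by gcongr; exact min_le_left _ _
      _ = h x := ENNReal.mul_div_cancel c0 cT
  simp only [hv, hw]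
  rw [lintegral_const_mul _ vm.ennreal_ofReal, lintegral_const_mul _ wm.ennreal_ofReal,
    mul_mul_mul_comm, ← hc]
  calc _ ≤ c ^ 2 * (∫⁻ x, k x) ^ 2 := by gcongr
    _ = (c * ∫⁻ x, k x) ^ 2 := by ring
    _ ≤ _ := by gcongr

/-- One-dimensional Prékopa-Leindler. -/
lemma pl_one (f g h : ℝ → ENNReal) (hf : Measurable f) (hg : Measurable g) (hh : Measurable h)
    (H : ∀ x y, f x * g y ≤ h (2⁻¹ * (x + y)) ^ 2) :
    (∫⁻ x, f x) * (∫⁻ x, g x) ≤ (∫⁻ x, h x) ^ 2 := by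
  have app : ∀ u : ℝ → ENNReal, Measurable u →
      Filter.Tendsto (fun n : ℕ => ∫⁻ x, min (u x) n) Filter.atTop (nhds (∫⁻ x, u x)) := by
    intro u hu
    refine lintegral_tendsto_of_tendsto_of_monotone
      (fun n => (hu.min measurable_const).aemeasurable) ?_ ?_
    · refine .of_forall fun x m n hmn => ?_
      exact min_le_min le_rfl (by exact_mod_cast hmn)
    · refine .of_forall fun x => ?_
      have := (tendsto_const_nhds (x := u x)).min ENNReal.tendsto_nat_nhds_top
      simpa using this
  have mono : ∀ u : ℝ → ENNReal, Monotone fun n : ℕ => ∫⁻ x, min (u x) n := by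
    intro u m n hmn
    exact lintegral_mono fun x => min_le_min le_rfl (by exact_mod_cast hmn)
  have eq : ∀ u : ℝ → ENNReal, Measurable u → (∫⁻ x, u x) = ⨆ n : ℕ, ∫⁻ x, min (u x) n :=
    fun u hu => tendsto_nhds_unique (app u hu) (tendsto_atTop_iSup (mono u))
  rw [eq f hf, eq g hg, ENNReal.iSup_mul]
  refine iSup_le fun n₁ => ?_
  rw [ENNReal.mul_iSup]
  refine iSup_le fun n₂ => ?_
  refine (mul_le_mul' (mono f (le_max_left n₁ n₂)) (mono g (le_max_right n₁ n₂))).trans ?_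
  generalize max n₁ n₂ = n
  refine pl_bdd _ _ h (hf.min measurable_const) (hg.min measurable_const) hh n (by simp)
    (fun x => min_le_right _ _) (fun x => min_le_right _ _) fun x y => ?_
  exact (mul_le_mul' (min_le_left _ _) (min_le_left _ _)).trans (H x y)

lemma pl_fin (d : ℕ) : ∀ (f g h : (Fin d → ℝ) → ENNReal), Measurable f → Measurable g →
    Measurable h → (∀ x y, f x * g y ≤ h ((2⁻¹ : ℝ) • (x + y)) ^ 2) →
    (∫⁻ x, f x) * (∫⁻ x, g x) ≤ (∫⁻ x, h x) ^ 2 := by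
  induction d with
  | zero =>
    intro f g h hf hg hh H
    have e : ∀ u : (Fin 0 → ℝ) → ENNReal, (∫⁻ x, u x) = u 0 := by
      intro u
      rw [lintegral_unique]
      rw [volume_pi, Measure.pi_univ]
      rw [Fintype.prod_empty, mul_one]
      exact congrArg u (Subsingleton.elim _ _)
    rw [e, e, e]
    simpa using H 0 0
  | succ n ih =>
    intro f g h hf hg hh H
    let φ := (MeasurableEquiv.piFinSuccAbove (fun _ : Fin (n + 1) => ℝ) 0).symm
    have φadd : ∀ (s t : ℝ) (x y : Fin n → ℝ),
        φ (2⁻¹ * (s + t), (2⁻¹ : ℝ) • (x + y)) = (2⁻¹ : ℝ) • (φ (s, x) + φ (t, y)) := by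
      intro s t x y
      ext i
      refine Fin.cases ?_ (fun i => ?_) i <;> simp [φ, MeasurableEquiv.piFinSuccAbove, mul_add]
    have fub : ∀ u : (Fin (n + 1) → ℝ) → ENNReal, Measurable u →
        (∫⁻ x, u x) = ∫⁻ s : ℝ, ∫⁻ x : Fin n → ℝ, u (φ (s, x)) := by
      intro u hu
      have mp := (volume_preserving_piFinSuccAbove (fun _ : Fin (n + 1) => ℝ) 0).symm
      rw [← mp.lintegral_comp hu, Measure.volume_eq_prod]
      exact lintegral_prod _ (hu.comp φ.measurable).aemeasurable
    have ms : ∀ u : (Fin (n + 1) → ℝ) → ENNReal, Measurable u → ∀ s : ℝ,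
        Measurable fun x : Fin n → ℝ => u (φ (s, x)) := fun u hu s =>
      (hu.comp φ.measurable).comp measurable_prodMk_left
    have mi : ∀ u : (Fin (n + 1) → ℝ) → ENNReal, Measurable u →
        Measurable fun s : ℝ => ∫⁻ x : Fin n → ℝ, u (φ (s, x)) := fun u hu =>
      (hu.comp φ.measurable).lintegral_prod_right'
    rw [fub f hf, fub g hg, fub h hh]
    refine pl_one _ _ _ (mi f hf) (mi g hg) (mi h hh) fun s t => ?_
    refine ih _ _ _ (ms f hf s) (ms g hg t) (ms h hh _) fun x y => ?_
    rw [φadd]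
    exact H _ _

/-- Anderson's lemma: if `C` and `K` are symmetric convex Borel subsets of `ℝᵈ`,
then `|(C - x) ∩ K| ≤ |C ∩ K|` for every `x`. -/
theorem stmt10 {d : ℕ} (C K : Set (Fin d → ℝ))
    (hCconv : Convex ℝ C) (hKconv : Convex ℝ K)
    (hCsym : C = -C) (hKsym : K = -K)
    (hCmeas : MeasurableSet C) (hKmeas : MeasurableSet K)
    (x : Fin d → ℝ) :
    volume (((fun y => y + x) ⁻¹' C) ∩ K) ≤ volume (C ∩ K) := by
  set A := ((fun y => y + x) ⁻¹' C) ∩ K with hA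
  have mA : MeasurableSet A := (measurable_add_const x hCmeas).inter hKmeas
  have mid : ∀ a ∈ A, ∀ b ∈ -A, (2⁻¹ : ℝ) • (a + b) ∈ C ∩ K := by
    rintro a ⟨ha1, ha2⟩ b ⟨hb1, hb2⟩
    have hb3 : -(-b + x) ∈ C := by rw [hCsym]; simpa using hb1
    have hb4 : b ∈ K := by rw [hKsym]; exact hb2
    have h2 : (0 : ℝ) ≤ 2⁻¹ := by norm_num
    have h3 : (2⁻¹ : ℝ) + 2⁻¹ = 1 := by norm_num
    constructor
    · have := hCconv ha1 hb3 h2 h2 h3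
      convert this using 1
      rw [← smul_add]
      congr 1
      show a + b = (a + x) + -(-b + x)
      abel
    · rw [smul_add]
      exact hKconv ha2 hb4 h2 h2 h3
  have main := pl_fin d (A.indicator 1) ((-A).indicator 1) ((C ∩ K).indicator 1)
    (measurable_one.indicator mA) (measurable_one.indicator mA.neg)
    (measurable_one.indicator (hCmeas.inter hKmeas)) (by
      intro a b
      by_cases ha : a ∈ A
      · by_cases hb : b ∈ -A
        · rw [Set.indicator_of_mem ha, Set.indicator_of_mem hb,
            Set.indicator_of_mem (mid a ha b hb)]
          simp
        · rw [Set.indicator_of_notMem hb]; simp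
      · rw [Set.indicator_of_notMem ha]; simp)
  rw [lintegral_indicator_one mA, lintegral_indicator_one mA.neg,
    lintegral_indicator_one (hCmeas.inter hKmeas), Measure.measure_neg, ← sq] at main
  exact (ENNReal.pow_le_pow_left_iff two_ne_zero).1 main
end

section
/- Fernique's theorem: if X is a centered E-valued Gaussian random variable, then there exists β > 0 such that E exp(β‖X‖²) < ∞. -/
open MeasureTheory ProbabilityTheory NNReal

/-- Fernique's theorem: if `X` is a centered `E`-valued Gaussian random variable,
then `E exp(β‖X‖²) < ∞` for some `β > 0`. -/
theorem stmt12 {Ω E : Type*} [MeasureSpace Ω] [IsProbabilityMeasure (ℙ : Measure Ω)]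
    [NormedAddCommGroup E] [NormedSpace ℝ E] [CompleteSpace E]
    (X : Ω → E) (hXmeas : StronglyMeasurable X)
    (hXgauss : ∀ φ : E →L[ℝ] ℝ, ∃ v : ℝ≥0,
      Measure.map (fun ω => φ (X ω)) ℙ = gaussianReal 0 v) :
    ∃ β : ℝ, 0 < β ∧ Integrable (fun ω => Real.exp (β * ‖X ω‖ ^ 2)) ℙ := by
  -- restrict to the closed span of the range, which is a separable Banach space
  let F : Submodule ℝ E := (Submodule.span ℝ (Set.range X)).topologicalClosure
  have hsep : TopologicalSpace.IsSeparable (F : Set E) := by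
    have h := (hXmeas.isSeparable_range.span (R := ℝ)).closure
    exact h
  have : TopologicalSpace.SeparableSpace F := hsep.separableSpace
  have : SecondCountableTopology F := UniformSpace.secondCountable_of_separable F
  have : CompleteSpace F :=
    (Submodule.isClosed_topologicalClosure _).completeSpace_coe
  have hmem : ∀ ω, X ω ∈ F := fun ω =>
    Submodule.le_topologicalClosure _ (Submodule.subset_span ⟨ω, rfl⟩)
  borelize E
  let Y : Ω → F := fun ω => ⟨X ω, hmem ω⟩
  have hY : Measurable Y := hXmeas.measurable.subtype_mk
  have hG : IsGaussian (Measure.map Y ℙ) := by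
    refine isGaussian_of_map_eq_gaussianReal fun L => ?_
    obtain ⟨g, hg, -⟩ := exists_extension_norm_eq F L
    obtain ⟨v, hv⟩ := hXgauss g
    refine ⟨0, v, ?_⟩
    rw [Measure.map_map (by fun_prop) hY, ← hv]
    congr 1
    ext ω
    exact (hg (Y ω)).symm
  obtain ⟨C, hC, hint⟩ := IsGaussian.exists_integrable_exp_sq (Measure.map Y ℙ)
  refine ⟨C, hC, ?_⟩
  exact hint.comp_measurable hY
end

section
/- Covariance domination for Gaussian measures: if X₁ and X₂ are centered E-valued Gaussian random variables with E⟨X₁,x*⟩² ≤ E⟨X₂,x*⟩² for all x* ∈ E*, then for every closed convex symmetric set C ⊆ E, P{X₁ ∉ C} ≤ P{X₂ ∉ C}. -/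
open MeasureTheory ProbabilityTheory NNReal

open scoped ENNReal Pointwise in
/-- One-dimensional Brunn-Minkowski for compact sets. -/
lemma bm_compact {K L : Set ℝ} (hK : IsCompact K) (hL : IsCompact L)
    (hKn : K.Nonempty) (hLn : L.Nonempty) :
    volume K + volume L ≤ volume (K + L) := by
  obtain ⟨a, haK, ha⟩ := hK.exists_isGreatest hKn
  obtain ⟨b, hbL, hb⟩ := hL.exists_isLeast hLn
  have h1 : volume ((fun x => x + b) '' K) = volume K := by
    simp [Set.image_add_right]
  have h2 : volume ((fun x => a + x) '' L) = volume L := by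
    simp [Set.image_add_left]
  have hd : volume (((fun x => x + b) '' K) ∩ ((fun x => a + x) '' L)) = 0 := by
    refine measure_mono_null (t := {a + b}) ?_ (by simp)
    rintro z ⟨⟨k, hk, rfl⟩, ⟨l, hl, h⟩⟩
    have := ha hk
    have := hb hl
    simp only [Set.mem_singleton_iff] at *
    linarith
  have hm : MeasurableSet ((fun x => a + x) '' L) :=
    (hL.image (by fun_prop)).measurableSet
  rw [← h1, ← h2, ← measure_union_add_inter _ hm, hd, add_zero]
  apply measure_mono
  rintro z (⟨k, hk, rfl⟩ | ⟨l, hl, rfl⟩)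
  · exact Set.add_mem_add hk hbL
  · exact Set.add_mem_add haK hl

open scoped ENNReal Pointwise in
lemma bm_meas {A B M : Set ℝ} (hA : MeasurableSet A) (hB : MeasurableSet B)
    (hAn : A.Nonempty) (hBn : B.Nonempty)
    (h : ∀ x ∈ A, ∀ y ∈ B, (1/2:ℝ) • (x + y) ∈ M) :
    volume A + volume B ≤ 2 * volume M := by
  obtain ⟨a, ha⟩ := hAn
  obtain ⟨b, hb⟩ := hBn
  have key : ∀ K ⊆ A, IsCompact K → ∀ L ⊆ B, IsCompact L →
      volume K + volume L ≤ 2 * volume M := by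
    intro K hKA hK L hLB hL
    have h2 : volume ((2:ℝ) • M) = 2 * volume M := by
      rw [Measure.addHaar_smul]; simp
    rw [← h2]
    calc volume K + volume L ≤ volume (insert a K) + volume (insert b L) := by
          gcongr <;> simp
      _ ≤ volume (insert a K + insert b L) :=
          bm_compact (hK.insert a) (hL.insert b) (by simp) (by simp)
      _ ≤ _ := by
          apply measure_mono
          rintro z ⟨x, hx, y, hy, rfl⟩
          have hx' : x ∈ A := Set.insert_subset ha hKA hx
          have hy' : y ∈ B := Set.insert_subset hb hLB hy
          refine ⟨_, h x hx' y hy', ?_⟩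
          simp
  rw [hA.measure_eq_iSup_isCompact, hB.measure_eq_iSup_isCompact]
  simp_rw [iSup_and']
  exact ENNReal.biSup_add_biSup_le' ⟨∅, by simp⟩ ⟨∅, by simp⟩
    fun K hK L hL => key K hK.1 hK.2 L hL.1 hL.2

open scoped ENNReal in
lemma layer {F : ℝ → ℝ≥0∞} (hF : Measurable F) (h1 : ∀ x, F x ≤ 1) :
    ∫⁻ x, F x = ∫⁻ t in Set.Ioi (0:ℝ), volume {x | ENNReal.ofReal t < F x} := by
  have hfin : ∀ x, F x ≠ ∞ := fun x => ne_top_of_le_ne_top (by simp) (h1 x)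
  have := lintegral_eq_lintegral_meas_lt (f := fun x => (F x).toReal) volume
    (Filter.Eventually.of_forall fun x => ENNReal.toReal_nonneg) hF.ennreal_toReal.aemeasurable
  simp only [ENNReal.ofReal_toReal (hfin _)] at this
  rw [this]
  refine setLIntegral_congr_fun measurableSet_Ioi fun t ht => ?_
  congr 1
  ext x
  exact (ENNReal.ofReal_lt_iff_lt_toReal (le_of_lt ht) (hfin x)).symm

open scoped ENNReal in
/-- Normalized one-dimensional Prékopa-Leindler inequality. -/
lemma pl_norm {F G H : ℝ → ℝ≥0∞} (hF : Measurable F) (hG : Measurable G) (hH : Measurable H)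
    (hF1 : ⨆ x, F x = 1) (hG1 : ⨆ x, G x = 1)
    (h : ∀ x y, F x * G y ≤ H ((1/2:ℝ) • (x + y)) ^ 2) :
    (∫⁻ x, F x) + ∫⁻ x, G x ≤ 2 * ∫⁻ x, H x := by
  have hFle : ∀ x, F x ≤ 1 := fun x => hF1 ▸ le_iSup F x
  have hGle : ∀ x, G x ≤ 1 := fun x => hG1 ▸ le_iSup G x
  calc (∫⁻ x, F x) + ∫⁻ x, G x ≤ 2 * ∫⁻ x, min (H x) 1 := by
        rw [layer hF hFle, layer hG hGle, layer (hH.min measurable_const) (fun x => min_le_right _ _),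
          ← lintegral_add_left, ← lintegral_const_mul]
        · refine setLIntegral_mono' measurableSet_Ioi fun t ht => ?_
          by_cases ht1 : ENNReal.ofReal t < 1
          · have hFn : {x | ENNReal.ofReal t < F x}.Nonempty := by
              rw [← hF1] at ht1
              exact lt_iSup_iff.1 ht1
            have hGn : {x | ENNReal.ofReal t < G x}.Nonempty := by
              rw [← hG1] at ht1
              exact lt_iSup_iff.1 ht1
            refine bm_meas (measurableSet_lt measurable_const hF)
              (measurableSet_lt measurable_const hG) hFn hGn ?_
            intro x hx y hy
            refine lt_min ?_ ht1
            by_contra hcon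
            push Not at hcon
            have h3 := (h x y).trans (pow_le_pow_left' hcon 2)
            rw [pow_two] at h3
            exact absurd (ENNReal.mul_lt_mul hx hy) (not_lt.2 h3)
          · have e1 : {x | ENNReal.ofReal t < F x} = ∅ := by
              ext x; simpa using (hFle x).trans (not_lt.1 ht1)
            have e2 : {x | ENNReal.ofReal t < G x} = ∅ := by
              ext x; simpa using (hGle x).trans (not_lt.1 ht1)
            simp [e1, e2]
        · refine Antitone.measurable fun s t hst => measure_mono fun x hx => ?_
          exact (ENNReal.ofReal_le_ofReal hst).trans_lt hx
        · refine Antitone.measurable fun s t hst => measure_mono fun x hx => ?_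
          exact (ENNReal.ofReal_le_ofReal hst).trans_lt hx
    _ ≤ _ := by
        gcongr with x
        exact min_le_left _ _

open scoped ENNReal in
lemma four_mul_le_sq (u v : ℝ≥0∞) : 4 * (u * v) ≤ (u + v) ^ 2 := by
  by_cases hu : u = ∞
  · simp [hu]
  by_cases hv : v = ∞
  · simp [hv]
  lift u to ℝ≥0 using hu
  lift v to ℝ≥0 using hv
  norm_cast
  rw [← NNReal.coe_le_coe]
  push_cast
  nlinarith [sq_nonneg ((u:ℝ) - v)]

open scoped ENNReal in
/-- One-dimensional Prékopa-Leindler inequality for bounded functions. -/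
lemma pl_one_s13 {F G H : ℝ → ℝ≥0∞} (hF : Measurable F) (hG : Measurable G) (hH : Measurable H)
    (hF1 : ⨆ x, F x ≠ ∞) (hG1 : ⨆ x, G x ≠ ∞)
    (h : ∀ x y, F x * G y ≤ H ((1/2:ℝ) • (x + y)) ^ 2) :
    (∫⁻ x, F x) * ∫⁻ x, G x ≤ (∫⁻ x, H x) ^ 2 := by
  set a := ⨆ x, F x with ha
  set b := ⨆ x, G x with hb
  by_cases ha0 : a = 0
  · have : ∀ x, F x = 0 := by simpa [ha] using ha0
    simp [this]
  by_cases hb0 : b = 0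
  · have : ∀ x, G x = 0 := by simpa [hb] using hb0
    simp [this]
  obtain ⟨c, hc⟩ : ∃ c : ℝ≥0∞, c ^ 2 = a * b :=
    ⟨(a * b) ^ (1/2:ℝ), by rw [← ENNReal.rpow_natCast, ← ENNReal.rpow_mul]; norm_num⟩
  have hab0 : a * b ≠ 0 := mul_ne_zero ha0 hb0
  have habt : a * b ≠ ∞ := ENNReal.mul_ne_top hF1 hG1
  have key := pl_norm (F := fun x => a⁻¹ * F x) (G := fun x => b⁻¹ * G x)
    (H := fun x => c⁻¹ * H x) (hF.const_mul _) (hG.const_mul _) (hH.const_mul _)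
    (by rw [← ENNReal.mul_iSup, ENNReal.inv_mul_cancel ha0 hF1])
    (by rw [← ENNReal.mul_iSup, ENNReal.inv_mul_cancel hb0 hG1]) (by
      intro x y
      rw [mul_pow, ← ENNReal.inv_pow, hc, ENNReal.mul_inv (Or.inl ha0) (Or.inl hF1)]
      calc a⁻¹ * F x * (b⁻¹ * G y) = a⁻¹ * b⁻¹ * (F x * G y) := by ring
        _ ≤ _ := by gcongr; exact h x y)
  rw [lintegral_const_mul _ hF, lintegral_const_mul _ hG, lintegral_const_mul _ hH] at key
  have h4 := (four_mul_le_sq _ _).trans (pow_le_pow_left' key 2)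
  have e1 : 4 * (a⁻¹ * (∫⁻ x, F x) * (b⁻¹ * ∫⁻ x, G x))
      = (4 * (a * b)⁻¹) * ((∫⁻ x, F x) * ∫⁻ x, G x) := by
    rw [ENNReal.mul_inv (Or.inl ha0) (Or.inl hF1)]; ring
  have e2 : (2 * (c⁻¹ * ∫⁻ x, H x)) ^ 2 = (4 * (a * b)⁻¹) * (∫⁻ x, H x) ^ 2 := by
    rw [mul_pow, mul_pow, ← ENNReal.inv_pow, hc]; ring
  rw [e1, e2] at h4
  exact (ENNReal.mul_le_mul_iff_right (by simp [habt]) (by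
    exact ENNReal.mul_ne_top (by simp) (by simpa using hab0))).1 h4

open scoped ENNReal in
/-- Midpoint Prékopa-Leindler property of a measure, for bounded functions. -/
def PLProp {E : Type*} [AddCommGroup E] [Module ℝ E] [MeasurableSpace E] (μ : Measure E) : Prop :=
  ∀ M : ℝ≥0∞, M ≠ ∞ → ∀ f g h : E → ℝ≥0∞, Measurable f → Measurable g → Measurable h →
    (∀ x, f x ≤ M) → (∀ x, g x ≤ M) →
    (∀ x y, f x * g y ≤ h ((1/2:ℝ) • (x + y)) ^ 2) →
    (∫⁻ x, f x ∂μ) * (∫⁻ x, g x ∂μ) ≤ (∫⁻ x, h x ∂μ) ^ 2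

lemma PLProp.map {E F : Type*} [AddCommGroup E] [Module ℝ E] [MeasurableSpace E]
    [AddCommGroup F] [Module ℝ F] [MeasurableSpace F] {μ : Measure E} (hμ : PLProp μ)
    (L : E →ₗ[ℝ] F) (hL : Measurable L) : PLProp (μ.map L) := by
  intro M hM f g h hf hg hh hfM hgM hfg
  rw [lintegral_map hf hL, lintegral_map hg hL, lintegral_map hh hL]
  refine hμ M hM _ _ _ (hf.comp hL) (hg.comp hL) (hh.comp hL) (fun x => hfM _) (fun x => hgM _) ?_
  intro x y
  simpa using hfg (L x) (L y)

lemma PLProp.prod {E F : Type*} [AddCommGroup E] [Module ℝ E] [MeasurableSpace E]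
    [AddCommGroup F] [Module ℝ F] [MeasurableSpace F] {μ : Measure E} {ν : Measure F}
    [IsProbabilityMeasure ν]
    (hμ : PLProp μ) (hν : PLProp ν) : PLProp (μ.prod ν) := by
  intro M hM f g h hf hg hh hfM hgM hfg
  rw [lintegral_prod _ hf.aemeasurable, lintegral_prod _ hg.aemeasurable,
    lintegral_prod _ hh.aemeasurable]
  refine hμ M hM _ _ _ hf.lintegral_prod_right' hg.lintegral_prod_right' hh.lintegral_prod_right'
    (fun x => ?_) (fun x => ?_) ?_
  · exact (lintegral_mono fun y => hfM (x, y)).trans (by simp)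
  · exact (lintegral_mono fun y => hgM (x, y)).trans (by simp)
  · intro x y
    refine hν M hM _ _ _ (hf.comp measurable_prodMk_left) (hg.comp measurable_prodMk_left)
      (hh.comp measurable_prodMk_left) (fun z => hfM _) (fun z => hgM _) ?_
    intro z w
    exact hfg (x, z) (y, w)

lemma PLProp.gaussian : PLProp (gaussianReal 0 1) := by
  intro M hM f g h hf hg hh hfM hgM hfg
  have hp : Measurable (gaussianPDF 0 1) := measurable_gaussianPDF 0 1
  have hple : ∀ x, gaussianPDF 0 1 x ≤ ENNReal.ofReal (√(2 * Real.pi * 1))⁻¹ := by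
    intro x
    refine ENNReal.ofReal_le_ofReal ?_
    simp only [gaussianPDFReal]
    refine mul_le_of_le_one_right (by positivity) (Real.exp_le_one_iff.2 ?_)
    rw [neg_div]
    simp only [neg_nonpos]
    positivity
  rw [gaussianReal_of_var_ne_zero _ (by simp), lintegral_withDensity_eq_lintegral_mul _ hp hf,
    lintegral_withDensity_eq_lintegral_mul _ hp hg, lintegral_withDensity_eq_lintegral_mul _ hp hh]
  refine pl_one_s13 (hp.mul hf) (hp.mul hg) (hp.mul hh) ?_ ?_ ?_
  · exact ne_top_of_le_ne_top (ENNReal.mul_ne_top ENNReal.ofReal_ne_top hM)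
      (iSup_le fun x => mul_le_mul' (hple x) (hfM x))
  · exact ne_top_of_le_ne_top (ENNReal.mul_ne_top ENNReal.ofReal_ne_top hM)
      (iSup_le fun x => mul_le_mul' (hple x) (hgM x))
  · intro x y
    simp only [Pi.mul_apply]
    rw [mul_pow, mul_mul_mul_comm]
    refine mul_le_mul' ?_ (hfg x y)
    simp only [gaussianPDF]
    rw [← ENNReal.ofReal_mul (gaussianPDFReal_nonneg _ _ _),
      ← ENNReal.ofReal_pow (gaussianPDFReal_nonneg _ _ _)]
    refine ENNReal.ofReal_le_ofReal ?_
    simp only [gaussianPDFReal]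
    rw [mul_mul_mul_comm, ← Real.exp_add, mul_pow, ← Real.exp_nat_mul, ← pow_two]
    refine mul_le_mul_of_nonneg_left (Real.exp_le_exp.2 ?_) (by positivity)
    simp only [smul_eq_mul, NNReal.coe_one]
    push_cast
    nlinarith [sq_nonneg (x - y)]

lemma PLProp.pi (n : ℕ) : PLProp (Measure.pi (fun _ : Fin n => gaussianReal 0 1)) := by
  induction n with
  | zero =>
    intro M hM f g h hf hg hh hfM hgM hfg
    rw [Measure.pi_of_empty]
    simp only [lintegral_dirac' _ hf, lintegral_dirac' _ hg, lintegral_dirac' _ hh]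
    refine (hfg _ _).trans (le_of_eq ?_)
    congr 2
    exact Subsingleton.elim _ _
  | succ n ih =>
    have h1 := (measurePreserving_piFinSuccAbove (fun _ : Fin (n+1) => gaussianReal 0 1) 0).symm.map_eq
    rw [← h1]
    have h2 := (PLProp.gaussian.prod ih).map
      (F := Fin (n+1) → ℝ) (Fin.consLinearEquiv ℝ (fun _ : Fin (n+1) => ℝ)).toLinearMap
      (by
        refine measurable_pi_lambda _ fun i => ?_
        refine Fin.cases ?_ (fun j => ?_) i
        · simpa using measurable_fst
        · exact (measurable_pi_apply j).comp measurable_snd)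
    convert h2 using 2
    ext p i
    all_goals simp [MeasurableEquiv.piFinSuccAbove]
    rfl

open scoped MatrixOrder in
lemma PLProp.multivariate (n : ℕ) (S : Matrix (Fin n) (Fin n) ℝ) :
    PLProp (multivariateGaussian 0 S) := by
  rw [multivariateGaussian, ← map_pi_eq_stdGaussian]
  have h1 := (PLProp.pi n).map (WithLp.linearEquiv 2 ℝ (Fin n → ℝ)).symm.toLinearMap
    (by exact (WithLp.measurable_toLp 2 _))
  have h2 := h1.map (Matrix.toEuclideanCLM (𝕜 := ℝ) (CFC.sqrt S)).toLinearMap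
    (by exact (Matrix.toEuclideanCLM (𝕜 := ℝ) (CFC.sqrt S)).measurable)
  convert h2 using 2
  · ext x
    simp
  · rfl

/-- Anderson's inequality for a symmetric set closed under midpoints. -/
lemma anderson {E : Type*} [AddCommGroup E] [Module ℝ E] [MeasurableSpace E] [MeasurableAdd E]
    [MeasurableNeg E] {μ : Measure E} (hμ : PLProp μ) (hsym : μ.map (fun x => -x) = μ)
    {B : Set E} (hB : MeasurableSet B) (hBneg : ∀ x ∈ B, -x ∈ B)
    (hBconv : ∀ x ∈ B, ∀ y ∈ B, (1/2:ℝ) • (x + y) ∈ B) (z : E) :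
    μ {x | z + x ∈ B} ≤ μ B := by
  have m1 : MeasurableSet {x | z + x ∈ B} := measurable_const_add z hB
  have m2 : MeasurableSet {x | -z + x ∈ B} := measurable_const_add (-z) hB
  have h := hμ 1 (by simp) ({x | z + x ∈ B}.indicator 1) ({x | -z + x ∈ B}.indicator 1)
    (B.indicator 1) (measurable_one.indicator m1) (measurable_one.indicator m2)
    (measurable_one.indicator hB) (fun x => Set.indicator_le_self _ _ _)
    (fun x => Set.indicator_le_self _ _ _) (by
      intro x y
      by_cases hx : z + x ∈ B
      · by_cases hy : -z + y ∈ B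
        · have : (1/2:ℝ) • (x + y) ∈ B := by
            have := hBconv _ hx _ hy
            convert this using 2
            abel
          rw [Set.indicator_of_mem this]
          simp [Set.indicator, hx, hy]
        · simp [Set.indicator, hy]
      · simp [Set.indicator, hx])
  rw [lintegral_indicator_one m1, lintegral_indicator_one m2, lintegral_indicator_one hB] at h
  have e : μ {x | -z + x ∈ B} = μ {x | z + x ∈ B} := by
    conv_lhs => rw [← hsym]
    rw [Measure.map_apply measurable_neg m2]
    congr 1
    ext x
    simp only [Set.preimage_ofPred_eq, Set.mem_ofPred_eq]
    constructor
    · intro hx; have := hBneg _ hx; convert this using 1; abel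
    · intro hx; have := hBneg _ hx; convert this using 1; abel
  rw [e, ← pow_two] at h
  exact (ENNReal.pow_le_pow_left_iff (by norm_num)).1 h

lemma mvg_neg (n : ℕ) {S : Matrix (Fin n) (Fin n) ℝ} (hS : S.PosSemidef) :
    (multivariateGaussian 0 S).map (fun x => -x) = multivariateGaussian 0 S := by
  apply Measure.ext_of_charFun
  ext t
  have h := charFun_map_smul (μ := multivariateGaussian 0 S) (-1) t
  simp only [neg_smul, one_smul] at h
  rw [h, charFun_multivariateGaussian hS, charFun_multivariateGaussian hS]
  simp [Matrix.mulVec_neg]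

lemma mvg_conv (n : ℕ) {S T : Matrix (Fin n) (Fin n) ℝ} (hS : S.PosSemidef)
    (hT : T.PosSemidef) (hTS : (T - S).PosSemidef) :
    multivariateGaussian 0 (T - S) ∗ multivariateGaussian 0 S = multivariateGaussian 0 T := by
  apply Measure.ext_of_charFun
  ext t
  rw [charFun_conv, charFun_multivariateGaussian hS, charFun_multivariateGaussian hT,
    charFun_multivariateGaussian hTS, ← Complex.exp_add]
  congr 1
  simp only [Matrix.sub_mulVec, dotProduct_sub, inner_zero_right]
  push_cast
  ring

lemma mvg_le (n : ℕ) {S T : Matrix (Fin n) (Fin n) ℝ} (hS : S.PosSemidef)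
    (hT : T.PosSemidef) (hTS : (T - S).PosSemidef) {B : Set (EuclideanSpace ℝ (Fin n))}
    (hB : MeasurableSet B) (hBneg : ∀ x ∈ B, -x ∈ B)
    (hBconv : ∀ x ∈ B, ∀ y ∈ B, (1/2:ℝ) • (x + y) ∈ B) :
    multivariateGaussian 0 T B ≤ multivariateGaussian 0 S B := by
  rw [← mvg_conv n hS hT hTS, ← lintegral_indicator_one hB,
    Measure.lintegral_conv (measurable_one.indicator hB)]
  calc _ ≤ ∫⁻ _, multivariateGaussian 0 S B ∂(multivariateGaussian 0 (T - S)) := by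
        refine lintegral_mono fun z => ?_
        have m1 : MeasurableSet {x | z + x ∈ B} := measurable_const_add z hB
        have := anderson (PLProp.multivariate n S) (mvg_neg n hS) hB hBneg hBconv z
        rw [← lintegral_indicator_one m1] at this
        exact this
    _ = _ := by simp

section law
variable {Ω E : Type*} [MeasureSpace Ω] [IsProbabilityMeasure (ℙ : Measure Ω)]
    [NormedAddCommGroup E] [NormedSpace ℝ E] {X : Ω → E}

lemma gauss_memLp (hm : StronglyMeasurable X)
    (hg : ∀ φ : E →L[ℝ] ℝ, ∃ v : ℝ≥0,
      Measure.map (fun ω => φ (X ω)) ℙ = gaussianReal 0 v) (φ : E →L[ℝ] ℝ) :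
    MemLp (fun ω => φ (X ω)) 2 ℙ := by
  obtain ⟨v, hv⟩ := hg φ
  have h := memLp_id_gaussianReal (μ := 0) (v := v) 2
  rw [← hv, memLp_map_measure_iff aestronglyMeasurable_id
    (φ.continuous.comp_stronglyMeasurable hm).measurable.aemeasurable] at h
  exact h

lemma gauss_charFun (hm : StronglyMeasurable X)
    (hg : ∀ φ : E →L[ℝ] ℝ, ∃ v : ℝ≥0,
      Measure.map (fun ω => φ (X ω)) ℙ = gaussianReal 0 v) (φ : E →L[ℝ] ℝ) :
    ∫ ω, Complex.exp ((φ (X ω) : ℝ) * Complex.I) ∂(ℙ : Measure Ω)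
      = Complex.exp (-((∫ ω, (φ (X ω)) ^ 2 ∂(ℙ : Measure Ω) : ℝ) : ℂ) / 2) := by
  obtain ⟨v, hv⟩ := hg φ
  have hmeas : AEMeasurable (fun ω => φ (X ω)) (ℙ : Measure Ω) :=
    (φ.continuous.comp_stronglyMeasurable hm).measurable.aemeasurable
  have h1 : ∫ ω, (φ (X ω)) ^ 2 ∂(ℙ : Measure Ω) = v := by
    have := variance_id_gaussianReal (μ := 0) (v := v)
    rw [variance_of_integral_eq_zero aemeasurable_id (by simp), ← hv,
      integral_map hmeas (by fun_prop)] at this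
    simpa using this
  have h2 := charFun_gaussianReal (μ := 0) (v := v) 1
  rw [← hv, charFun_apply_real, integral_map hmeas (by fun_prop)] at h2
  rw [h1]
  simpa [neg_div] using h2

noncomputable def covM (X : Ω → E) {n : ℕ} (φ : Fin n → E →L[ℝ] ℝ) : Matrix (Fin n) (Fin n) ℝ :=
  Matrix.of fun i j => ∫ ω, φ i (X ω) * φ j (X ω) ∂(ℙ : Measure Ω)

lemma covM_quad (hm : StronglyMeasurable X)
    (hg : ∀ φ : E →L[ℝ] ℝ, ∃ v : ℝ≥0,
      Measure.map (fun ω => φ (X ω)) ℙ = gaussianReal 0 v) {n : ℕ} (φ : Fin n → E →L[ℝ] ℝ)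
    (t : Fin n → ℝ) :
    t ⬝ᵥ (covM X φ).mulVec t = ∫ ω, ((∑ i, t i • φ i) (X ω)) ^ 2 ∂(ℙ : Measure Ω) := by
  have hint : ∀ i j, Integrable (fun ω => φ i (X ω) * φ j (X ω)) (ℙ : Measure Ω) := fun i j =>
    (gauss_memLp hm hg (φ i)).integrable_mul (gauss_memLp hm hg (φ j))
  have e : ∀ ω, ((∑ i, t i • φ i) (X ω)) ^ 2
      = ∑ i, ∑ j, t i * (t j * (φ i (X ω) * φ j (X ω))) := by
    intro ω
    simp only [_root_.sum_apply, _root_.smul_apply, smul_eq_mul]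
    rw [pow_two, Finset.sum_mul_sum]
    refine Finset.sum_congr rfl fun i _ => Finset.sum_congr rfl fun j _ => by ring
  simp_rw [e]
  rw [integral_finsetSum _ fun i _ => integrable_finsetSum _ fun j _ =>
    ((hint i j).const_mul _).const_mul _]
  simp only [dotProduct, Matrix.mulVec, covM, Matrix.of_apply, Finset.mul_sum]
  refine Finset.sum_congr rfl fun i _ => ?_
  rw [integral_finsetSum _ fun j _ => ((hint i j).const_mul _).const_mul _]
  refine Finset.sum_congr rfl fun j _ => ?_
  rw [integral_const_mul, integral_const_mul]
  ring

lemma covM_herm {n : ℕ} (φ : Fin n → E →L[ℝ] ℝ) : (covM X φ).IsHermitian := by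
  ext i j
  simp [covM, mul_comm]

lemma covM_pos (hm : StronglyMeasurable X)
    (hg : ∀ φ : E →L[ℝ] ℝ, ∃ v : ℝ≥0,
      Measure.map (fun ω => φ (X ω)) ℙ = gaussianReal 0 v) {n : ℕ} (φ : Fin n → E →L[ℝ] ℝ) :
    (covM X φ).PosSemidef := by
  refine Matrix.PosSemidef.of_dotProduct_mulVec_nonneg (covM_herm φ) fun t => ?_
  rw [star_trivial, covM_quad hm hg]
  positivity

lemma meas_vec (hm : StronglyMeasurable X) {n : ℕ} (φ : Fin n → E →L[ℝ] ℝ) :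
    Measurable (fun ω => (WithLp.toLp 2 (fun i => φ i (X ω)) : EuclideanSpace ℝ (Fin n))) :=
  (WithLp.measurable_toLp 2 _).comp (measurable_pi_lambda _ fun i =>
    ((φ i).continuous.comp_stronglyMeasurable hm).measurable)

lemma law_eq (hm : StronglyMeasurable X)
    (hg : ∀ φ : E →L[ℝ] ℝ, ∃ v : ℝ≥0,
      Measure.map (fun ω => φ (X ω)) ℙ = gaussianReal 0 v) {n : ℕ} (φ : Fin n → E →L[ℝ] ℝ) :
    Measure.map (fun ω => (WithLp.toLp 2 (fun i => φ i (X ω)) : EuclideanSpace ℝ (Fin n))) ℙ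
      = multivariateGaussian 0 (covM X φ) := by
  have hmeas := meas_vec hm φ
  have := Measure.isProbabilityMeasure_map (μ := (ℙ : Measure Ω)) hmeas.aemeasurable
  apply Measure.ext_of_charFun
  ext t
  rw [charFun_multivariateGaussian (covM_pos hm hg φ), covM_quad hm hg, charFun_apply,
    integral_map hmeas.aemeasurable (by fun_prop)]
  have := gauss_charFun hm hg (∑ i, t i • φ i)
  simp only [inner_zero_right, Complex.ofReal_zero, zero_mul, zero_sub, ← neg_div]
  rw [← this]
  congr 1
  ext ω
  congr 3
  simp [PiLp.inner_apply]

end law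

lemma finite_dom {Ω₁ Ω₂ E : Type*}
    [MeasureSpace Ω₁] [IsProbabilityMeasure (ℙ : Measure Ω₁)]
    [MeasureSpace Ω₂] [IsProbabilityMeasure (ℙ : Measure Ω₂)]
    [NormedAddCommGroup E] [NormedSpace ℝ E]
    (X₁ : Ω₁ → E) (X₂ : Ω₂ → E)
    (hX₁meas : StronglyMeasurable X₁) (hX₂meas : StronglyMeasurable X₂)
    (hX₁gauss : ∀ φ : E →L[ℝ] ℝ, ∃ v : ℝ≥0,
      Measure.map (fun ω => φ (X₁ ω)) ℙ = gaussianReal 0 v)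
    (hX₂gauss : ∀ φ : E →L[ℝ] ℝ, ∃ v : ℝ≥0,
      Measure.map (fun ω => φ (X₂ ω)) ℙ = gaussianReal 0 v)
    (hdom : ∀ φ : E →L[ℝ] ℝ,
      (∫ ω, (φ (X₁ ω)) ^ 2 ∂ℙ) ≤ ∫ ω, (φ (X₂ ω)) ^ 2 ∂ℙ)
    (n : ℕ) (φ : Fin n → E →L[ℝ] ℝ) (c : Fin n → ℝ) :
    ℙ {ω | ∀ i, |φ i (X₂ ω)| ≤ c i} ≤ ℙ {ω | ∀ i, |φ i (X₁ ω)| ≤ c i} := by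
  set B : Set (EuclideanSpace ℝ (Fin n)) := {x | ∀ i, |x i| ≤ c i} with hBdef
  have hB : MeasurableSet B := by
    have : B = ⋂ i, {x | |x i| ≤ c i} := by ext; simp [B]
    rw [this]
    refine MeasurableSet.iInter fun i => IsClosed.measurableSet ?_
    exact isClosed_le (by fun_prop) continuous_const
  have hneg : ∀ x ∈ B, -x ∈ B := by
    intro x hx i
    simpa using hx i
  have hconv : ∀ x ∈ B, ∀ y ∈ B, (1/2:ℝ) • (x + y) ∈ B := by
    intro x hx y hy i
    have h1 := abs_le.1 (hx i)
    have h2 := abs_le.1 (hy i)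
    simp only [PiLp.smul_apply, PiLp.add_apply, smul_eq_mul]
    rw [abs_le]
    constructor <;> linarith
  have hTS : (covM X₂ φ - covM X₁ φ).PosSemidef := by
    refine Matrix.PosSemidef.of_dotProduct_mulVec_nonneg
      ((covM_herm φ).sub (covM_herm φ)) fun t => ?_
    rw [star_trivial, Matrix.sub_mulVec, dotProduct_sub, covM_quad hX₁meas hX₁gauss,
      covM_quad hX₂meas hX₂gauss]
    exact sub_nonneg.2 (hdom _)
  have key := mvg_le n (covM_pos hX₁meas hX₁gauss φ) (covM_pos hX₂meas hX₂gauss φ) hTS hB hneg hconv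
  rw [← law_eq hX₁meas hX₁gauss, ← law_eq hX₂meas hX₂gauss,
    Measure.map_apply (meas_vec hX₁meas φ) hB, Measure.map_apply (meas_vec hX₂meas φ) hB] at key
  exact key

/-- A closed convex symmetric set is a countable intersection of slabs, on a separable set. -/
lemma slabs {E : Type*} [NormedAddCommGroup E] [NormedSpace ℝ E]
    {C S : Set E} (hS : TopologicalSpace.IsSeparable S)
    (hCclosed : IsClosed C) (hCconv : Convex ℝ C) (hCsym : C = -C) :
    ∃ (φ : ℕ → E →L[ℝ] ℝ) (c : ℕ → ℝ), ∀ x ∈ S, x ∈ C ↔ ∀ n, |φ n x| ≤ c n := by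
  have hsep : ∀ x : E, ∃ f : (E →L[ℝ] ℝ) × ℝ, (∀ a ∈ C, |f.1 a| ≤ f.2) ∧
      (x ∉ C → f.2 < f.1 x) := by
    intro x
    by_cases hx : x ∈ C
    · exact ⟨(0, 0), by simp, fun h => absurd hx h⟩
    · obtain ⟨f, u, h1, h2⟩ := geometric_hahn_banach_closed_point hCconv hCclosed hx
      refine ⟨(f, u), fun a ha => abs_le.2 ⟨?_, (h1 a ha).le⟩, fun _ => h2⟩
      have : -a ∈ C := by rw [hCsym] at ha; simpa using ha
      have := h1 _ this
      simp only [map_neg] at this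
      simp only
      linarith
  choose f hf1 hf2 using hsep
  have : SecondCountableTopology S := hS.secondCountableTopology
  obtain ⟨T, hT, hTc, hTU⟩ := TopologicalSpace.isOpen_biUnion_countable
    (Set.univ : Set E) (fun x => {s : S | (f x).2 < (f x).1 (s : E)})
    (fun x _ => isOpen_lt continuous_const (by fun_prop))
  have hT' : (insert 0 T).Countable := hTc.insert 0
  obtain ⟨e, he⟩ := hT'.exists_eq_range (Set.insert_nonempty 0 T)
  refine ⟨fun n => (f (e n)).1, fun n => (f (e n)).2, fun x hx => ⟨fun hxC n => hf1 _ x hxC, ?_⟩⟩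
  intro h
  by_contra hxC
  have hmem : (⟨x, hx⟩ : S) ∈ ⋃ i ∈ T, {s : S | (f i).2 < (f i).1 (s : E)} := by
    rw [hTU]
    simp only [Set.mem_iUnion]
    exact ⟨x, Set.mem_univ _, hf2 x hxC⟩
  simp only [Set.mem_iUnion] at hmem
  obtain ⟨i, hiT, hi⟩ := hmem
  have : i ∈ Set.range e := he ▸ Set.mem_insert_of_mem _ hiT
  obtain ⟨n, rfl⟩ := this
  exact absurd ((le_abs_self _).trans (h n)) (not_le.2 hi)

lemma slab_lim {Ω E : Type*} [MeasureSpace Ω] [IsProbabilityMeasure (ℙ : Measure Ω)]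
    [NormedAddCommGroup E] [NormedSpace ℝ E] {X : Ω → E} (hm : StronglyMeasurable X)
    (φ : ℕ → E →L[ℝ] ℝ) (c : ℕ → ℝ) :
    Filter.Tendsto (fun n : ℕ => (ℙ : Measure Ω) {ω | ∀ i : Fin n, |φ i (X ω)| ≤ c i})
      Filter.atTop (nhds (ℙ {ω | ∀ i, |φ i (X ω)| ≤ c i})) := by
  have hms : ∀ i, MeasurableSet {ω | |φ i (X ω)| ≤ c i} := fun i =>
    measurableSet_le (((φ i).continuous.comp_stronglyMeasurable hm).measurable.abs)
      measurable_const
  have h := tendsto_measure_iInter_atTop (μ := (ℙ : Measure Ω))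
    (s := fun n : ℕ => {ω | ∀ i : Fin n, |φ i (X ω)| ≤ c i}) (fun n => by
      have : {ω | ∀ i : Fin n, |φ i (X ω)| ≤ c i} = ⋂ i : Fin n, {ω | |φ i (X ω)| ≤ c i} := by
        ext; simp
      rw [this]
      exact (MeasurableSet.iInter fun i : Fin n => hms i).nullMeasurableSet)
    (fun m n hmn ω hω i => hω ⟨i, i.2.trans_le hmn⟩) ⟨0, measure_ne_top _ _⟩
  have e : {ω | ∀ i, |φ i (X ω)| ≤ c i} = ⋂ n : ℕ, {ω | ∀ i : Fin n, |φ i (X ω)| ≤ c i} := by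
    ext ω
    simp only [Set.mem_iInter, Set.mem_ofPred_eq]
    exact ⟨fun h n i => h i, fun h i => h (i + 1) ⟨i, by omega⟩⟩
  rw [e]
  exact h

lemma slab_meas {Ω E : Type*} [MeasureSpace Ω]
    [NormedAddCommGroup E] [NormedSpace ℝ E] {X : Ω → E} (hm : StronglyMeasurable X)
    (φ : ℕ → E →L[ℝ] ℝ) (c : ℕ → ℝ) :
    MeasurableSet {ω | ∀ i, |φ i (X ω)| ≤ c i} := by
  have : {ω | ∀ i, |φ i (X ω)| ≤ c i} = ⋂ i, {ω | |φ i (X ω)| ≤ c i} := by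
    ext; simp
  rw [this]
  exact MeasurableSet.iInter fun i =>
    measurableSet_le (((φ i).continuous.comp_stronglyMeasurable hm).measurable.abs)
      measurable_const

/-- Covariance domination for Gaussian measures: if `E⟨X₁,x*⟩² ≤ E⟨X₂,x*⟩²` for
all functionals `x*`, then `P{X₁ ∉ C} ≤ P{X₂ ∉ C}` for every closed convex
symmetric set `C`. -/
theorem stmt13 {Ω₁ Ω₂ E : Type*}
    [MeasureSpace Ω₁] [IsProbabilityMeasure (ℙ : Measure Ω₁)]
    [MeasureSpace Ω₂] [IsProbabilityMeasure (ℙ : Measure Ω₂)]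
    [NormedAddCommGroup E] [NormedSpace ℝ E] [CompleteSpace E]
    (X₁ : Ω₁ → E) (X₂ : Ω₂ → E)
    (hX₁meas : StronglyMeasurable X₁) (hX₂meas : StronglyMeasurable X₂)
    (hX₁gauss : ∀ φ : E →L[ℝ] ℝ, ∃ v : ℝ≥0,
      Measure.map (fun ω => φ (X₁ ω)) ℙ = gaussianReal 0 v)
    (hX₂gauss : ∀ φ : E →L[ℝ] ℝ, ∃ v : ℝ≥0,
      Measure.map (fun ω => φ (X₂ ω)) ℙ = gaussianReal 0 v)
    (hdom : ∀ φ : E →L[ℝ] ℝ,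
      (∫ ω, (φ (X₁ ω)) ^ 2 ∂ℙ) ≤ ∫ ω, (φ (X₂ ω)) ^ 2 ∂ℙ)
    (C : Set E) (hCclosed : IsClosed C) (hCconv : Convex ℝ C) (hCsym : C = -C) :
    ℙ {ω | X₁ ω ∉ C} ≤ ℙ {ω | X₂ ω ∉ C} := by
  obtain ⟨φ, c, hφ⟩ := slabs (hX₁meas.isSeparable_range.union hX₂meas.isSeparable_range)
    hCclosed hCconv hCsym
  have e1 : {ω | X₁ ω ∉ C} = {ω | ∀ i, |φ i (X₁ ω)| ≤ c i}ᶜ := by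
    ext ω
    exact not_congr (hφ (X₁ ω) (Or.inl ⟨ω, rfl⟩))
  have e2 : {ω | X₂ ω ∉ C} = {ω | ∀ i, |φ i (X₂ ω)| ≤ c i}ᶜ := by
    ext ω
    exact not_congr (hφ (X₂ ω) (Or.inr ⟨ω, rfl⟩))
  have key := le_of_tendsto_of_tendsto' (slab_lim hX₂meas φ c) (slab_lim hX₁meas φ c) fun n =>
    finite_dom X₁ X₂ hX₁meas hX₂meas hX₁gauss hX₂gauss hdom n (fun i => φ i) (fun i => c i)
  rw [e1, e2, prob_compl_eq_one_sub (slab_meas hX₁meas φ c),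
    prob_compl_eq_one_sub (slab_meas hX₂meas φ c)]
  exact tsub_le_tsub_left key 1
end

section
/- If X₁ and X₂ are centered E-valued Gaussian random variables with E⟨X₁,x*⟩² ≤ E⟨X₂,x*⟩² for all x* ∈ E*, and φ : E → [0,∞) is lower semicontinuous, convex, and symmetric (φ(−x) = φ(x)), then Eφ(X₁) ≤ Eφ(X₂). -/
open MeasureTheory ProbabilityTheory NNReal
open scoped ENNReal

section aux
variable {Ω E : Type*} [MeasureSpace Ω] [IsProbabilityMeasure (ℙ : Measure Ω)]
  [NormedAddCommGroup E] [NormedSpace ℝ E] {X : Ω → E}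

lemma aux_meas (hX : StronglyMeasurable X) (ψ : E →L[ℝ] ℝ) : Measurable (fun ω => ψ (X ω)) :=
  (ψ.continuous.comp_stronglyMeasurable hX).measurable

lemma aux_memLp (hX : StronglyMeasurable X) (h : ∀ ψ : E →L[ℝ] ℝ, ∃ v : ℝ≥0,
      Measure.map (fun ω => ψ (X ω)) ℙ = gaussianReal 0 v) (ψ : E →L[ℝ] ℝ) :
    MemLp (fun ω => ψ (X ω)) 2 ℙ := by
  obtain ⟨v, hv⟩ := h ψ
  have h1 : MemLp id 2 (Measure.map (fun ω => ψ (X ω)) ℙ) := by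
    rw [hv]; exact_mod_cast memLp_id_gaussianReal (μ := 0) (v := v) 2
  exact (memLp_map_measure_iff (by fun_prop) (aux_meas hX ψ).aemeasurable).1 h1

lemma aux_char (hX : StronglyMeasurable X) (h : ∀ ψ : E →L[ℝ] ℝ, ∃ v : ℝ≥0,
      Measure.map (fun ω => ψ (X ω)) ℙ = gaussianReal 0 v) (ψ : E →L[ℝ] ℝ) :
    ∫ ω, Complex.exp (ψ (X ω) * Complex.I) ∂ℙ
      = Complex.exp (-((∫ ω, (ψ (X ω)) ^ 2 ∂ℙ : ℝ) : ℂ) / 2) := by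
  obtain ⟨v, hv⟩ := h ψ
  have hm := (aux_meas hX ψ).aemeasurable (μ := ℙ)
  have h1 : ∫ ω, (ψ (X ω)) ^ 2 ∂ℙ = v := by
    have := variance_fun_id_gaussianReal (μ := 0) (v := v)
    rw [variance_eq_integral measurable_id'.aemeasurable, ← hv,
      integral_map hm (by fun_prop), integral_map hm (by fun_prop)] at this
    have h0 : ∫ ω, ψ (X ω) ∂ℙ = 0 := by
      have := integral_id_gaussianReal (μ := 0) (v := v)
      rwa [← hv, integral_map hm (by fun_prop)] at this
    simpa [h0] using this
  have h2 := charFun_gaussianReal (μ := 0) (v := v) 1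
  rw [← hv, charFun_apply_real, integral_map hm (by fun_prop)] at h2
  rw [h1]
  simpa [neg_div] using h2

/-- covariance matrix -/
noncomputable def auxCov {N : ℕ} (X : Ω → E) (ψ : Fin N → E →L[ℝ] ℝ) : Matrix (Fin N) (Fin N) ℝ :=
  Matrix.of fun i j => ∫ ω, ψ i (X ω) * ψ j (X ω) ∂ℙ

lemma auxCov_quad (hX : StronglyMeasurable X) (h : ∀ ψ : E →L[ℝ] ℝ, ∃ v : ℝ≥0,
      Measure.map (fun ω => ψ (X ω)) ℙ = gaussianReal 0 v) {N : ℕ} (ψ : Fin N → E →L[ℝ] ℝ)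
    (t : Fin N → ℝ) :
    t ⬝ᵥ (auxCov X ψ).mulVec t = ∫ ω, ((∑ i, t i • ψ i) (X ω)) ^ 2 ∂ℙ := by
  have hint : ∀ i j, Integrable (fun ω => ψ i (X ω) * ψ j (X ω)) ℙ := fun i j =>
    (aux_memLp hX h (ψ i)).integrable_mul (aux_memLp hX h (ψ j))
  have : ∀ ω, ((∑ i, t i • ψ i) (X ω)) ^ 2
      = ∑ i, ∑ j, (t i * t j) * (ψ i (X ω) * ψ j (X ω)) := by
    intro ω
    simp only [sq, ContinuousLinearMap.sum_apply, ContinuousLinearMap.smul_apply, smul_eq_mul,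
      Finset.sum_mul_sum]
    exact Finset.sum_congr rfl fun i _ => Finset.sum_congr rfl fun j _ => by ring
  simp_rw [this]
  rw [integral_finsetSum _ fun i _ => integrable_finsetSum _ fun j _ => (hint i j).const_mul _]
  simp_rw [dotProduct, Matrix.mulVec, dotProduct, auxCov, Matrix.of_apply, Finset.mul_sum]
  refine Finset.sum_congr rfl fun i _ => ?_
  rw [integral_finsetSum _ fun j _ => (hint i j).const_mul _]
  refine Finset.sum_congr rfl fun j _ => ?_
  rw [integral_const_mul]; ring

/-- finite-dimensional projection -/
noncomputable def auxProj {N : ℕ} (X : Ω → E) (ψ : Fin N → E →L[ℝ] ℝ) (ω : Ω) :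
    EuclideanSpace ℝ (Fin N) := WithLp.toLp 2 fun i => ψ i (X ω)

lemma auxProj_meas (hX : StronglyMeasurable X) {N : ℕ} (ψ : Fin N → E →L[ℝ] ℝ) :
    Measurable (auxProj X ψ) := by
  have : Measurable fun ω i => ψ i (X ω) := measurable_pi_lambda _ fun i => aux_meas hX (ψ i)
  exact (by fun_prop : Measurable (WithLp.toLp 2 : (Fin N → ℝ) → _)).comp this

lemma auxProj_char (hX : StronglyMeasurable X) (h : ∀ ψ : E →L[ℝ] ℝ, ∃ v : ℝ≥0,
      Measure.map (fun ω => ψ (X ω)) ℙ = gaussianReal 0 v) {N : ℕ} (ψ : Fin N → E →L[ℝ] ℝ)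
    (t : EuclideanSpace ℝ (Fin N)) :
    charFun (Measure.map (auxProj X ψ) ℙ) t
      = Complex.exp (-((t.ofLp ⬝ᵥ (auxCov X ψ).mulVec t.ofLp : ℝ) : ℂ) / 2) := by
  rw [auxCov_quad hX h, ← aux_char hX h, charFun_apply,
    integral_map (auxProj_meas hX ψ).aemeasurable (by fun_prop)]
  congr with ω
  simp [auxProj, PiLp.inner_apply]

end aux

lemma aux_fin {Ω₁ Ω₂ E : Type*}
    [MeasureSpace Ω₁] [IsProbabilityMeasure (ℙ : Measure Ω₁)]
    [MeasureSpace Ω₂] [IsProbabilityMeasure (ℙ : Measure Ω₂)]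
    [NormedAddCommGroup E] [NormedSpace ℝ E]
    (X₁ : Ω₁ → E) (X₂ : Ω₂ → E)
    (hX₁meas : StronglyMeasurable X₁) (hX₂meas : StronglyMeasurable X₂)
    (hX₁gauss : ∀ ψ : E →L[ℝ] ℝ, ∃ v : ℝ≥0,
      Measure.map (fun ω => ψ (X₁ ω)) ℙ = gaussianReal 0 v)
    (hX₂gauss : ∀ ψ : E →L[ℝ] ℝ, ∃ v : ℝ≥0,
      Measure.map (fun ω => ψ (X₂ ω)) ℙ = gaussianReal 0 v)
    (hdom : ∀ ψ : E →L[ℝ] ℝ,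
      (∫ ω, (ψ (X₁ ω)) ^ 2 ∂ℙ) ≤ ∫ ω, (ψ (X₂ ω)) ^ 2 ∂ℙ)
    {N : ℕ} (ψ : Fin N → E →L[ℝ] ℝ) (g : EuclideanSpace ℝ (Fin N) → ℝ≥0∞) (hg : Measurable g)
    (hconv : ∀ x y, 2 * g x ≤ g (x + y) + g (x - y)) :
    ∫⁻ ω, g (auxProj X₁ ψ ω) ∂ℙ ≤ ∫⁻ ω, g (auxProj X₂ ψ ω) ∂ℙ := by
  set S := auxCov X₂ ψ - auxCov X₁ ψ with hSdef
  have hS : S.PosSemidef := by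
    refine Matrix.PosSemidef.of_dotProduct_mulVec_nonneg ?_ fun t => ?_
    · ext i j
      simp [hSdef, auxCov, mul_comm]
    · rw [hSdef, Matrix.sub_mulVec, dotProduct_sub, star_trivial, auxCov_quad hX₁meas hX₁gauss,
        auxCov_quad hX₂meas hX₂gauss]
      exact sub_nonneg.2 (hdom _)
  set ν := multivariateGaussian (0 : EuclideanSpace ℝ (Fin N)) S with hν
  set μ₁ := Measure.map (auxProj X₁ ψ) ℙ with hμ₁
  have : IsProbabilityMeasure μ₁ :=
    Measure.isProbabilityMeasure_map (auxProj_meas hX₁meas ψ).aemeasurable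
  have : IsProbabilityMeasure (Measure.map (auxProj X₂ ψ) ℙ) :=
    Measure.isProbabilityMeasure_map (auxProj_meas hX₂meas ψ).aemeasurable
  have hneg : ν.map (fun x => -x) = ν := by
    have : IsProbabilityMeasure (ν.map (fun x => -x)) :=
      Measure.isProbabilityMeasure_map (by fun_prop)
    refine Measure.ext_of_charFun (funext fun t => ?_)
    have := charFun_map_smul (μ := ν) (-1) t
    simp only [neg_smul, one_smul] at this
    rw [this, hν, charFun_multivariateGaussian hS, charFun_multivariateGaussian hS]
    simp [Matrix.mulVec_neg]
  have hconvol : Measure.map (auxProj X₂ ψ) ℙ = μ₁ ∗ ν := by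
    refine Measure.ext_of_charFun (funext fun t => ?_)
    rw [charFun_conv, auxProj_char hX₂meas hX₂gauss, auxProj_char hX₁meas hX₁gauss,
      charFun_multivariateGaussian hS, ← Complex.exp_add, hSdef, Matrix.sub_mulVec, dotProduct_sub]
    congr 1
    push_cast
    simp
    ring
  rw [← lintegral_map hg (auxProj_meas hX₁meas ψ), ← lintegral_map hg (auxProj_meas hX₂meas ψ),
    hconvol, Measure.lintegral_conv hg]
  refine lintegral_mono fun x => ?_
  have e : ∫⁻ y, g (x - y) ∂ν = ∫⁻ y, g (x + y) ∂ν := by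
    conv_rhs => rw [← hneg]
    rw [lintegral_map (by fun_prop) (by fun_prop)]
    simp [sub_eq_add_neg]
  have h2 : 2 * g x ≤ 2 * ∫⁻ y, g (x + y) ∂ν := by
    calc 2 * g x = ∫⁻ y, 2 * g x ∂ν := by simp
      _ ≤ ∫⁻ y, (g (x + y) + g (x - y)) ∂ν := lintegral_mono fun y => hconv x y
      _ = _ := by rw [lintegral_add_left (by fun_prop), e, two_mul]
  exact (ENNReal.mul_le_mul_iff_right (by simp) (by simp)).1 h2

/-- Countable affine minorants on a separable subspace. -/
lemma aux_affine {E : Type*} [NormedAddCommGroup E] [NormedSpace ℝ E] (s : Set E)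
    (hs : TopologicalSpace.IsSeparable s) (φ : E → ℝ) (hφlsc : LowerSemicontinuous φ)
    (hφconv : ConvexOn ℝ Set.univ φ) :
    ∃ (l : ℕ → E →L[ℝ] ℝ) (c : ℕ → ℝ), ∀ x ∈ s, (∀ n, l n x + c n ≤ φ x) ∧
      ⨆ n, (l n x + c n) = φ x := by
  let F := Submodule.span ℝ s
  have hF : TopologicalSpace.IsSeparable (F : Set E) := hs.span
  have : TopologicalSpace.SeparableSpace F := hF.separableSpace
  have : SecondCountableTopology F := UniformSpace.secondCountable_of_separable F
  obtain ⟨l, c, h1, h2⟩ := ConvexOn.univ_sSup_of_nat_affine_eq (𝕜 := ℝ) (E := F)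
    (φ := fun x => φ x) (hφlsc.comp continuous_subtype_val)
    (hφconv.comp_linearMap F.subtype)
  choose L hL _ using fun n => exists_extension_norm_eq F (l n)
  refine ⟨L, c, fun x hx => ?_⟩
  have hxF : x ∈ F := Submodule.subset_span hx
  have hLx : ∀ n, L n x = l n ⟨x, hxF⟩ := fun n => hL n ⟨x, hxF⟩
  constructor
  · intro n; rw [hLx]; exact h1 n ⟨x, hxF⟩
  · simp_rw [hLx]
    have := congrFun h2 ⟨x, hxF⟩
    simpa [iSup_apply] using this

lemma aux_ofReal {φx : ℝ} {a : ℕ → ℝ} (h1 : ∀ n, a n ≤ φx) (h2 : ⨆ n, a n = φx) :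
    ENNReal.ofReal φx = ⨆ N : ℕ, ⨆ i : Fin N, ENNReal.ofReal (a i) := by
  apply le_antisymm
  · have hlub : IsLUB (Set.range a) φx := h2 ▸ isLUB_ciSup ⟨φx, by rintro _ ⟨n, rfl⟩; exact h1 n⟩
    refine le_of_forall_lt fun r hr => ?_
    lift r to ℝ≥0 using ne_top_of_lt hr
    rw [ENNReal.lt_ofReal_iff_toReal_lt (by simp)] at hr
    obtain ⟨_, ⟨n, rfl⟩, hn, _⟩ := hlub.exists_between hr
    refine lt_of_lt_of_le ?_ (le_iSup_of_le (n + 1)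
      (le_iSup_of_le ⟨n, n.lt_succ_self⟩ le_rfl))
    rwa [ENNReal.lt_ofReal_iff_toReal_lt (by simp)]
  · exact iSup_le fun N => iSup_le fun i => ENNReal.ofReal_le_ofReal (h1 _)

/-- If `X₁`, `X₂` are centered `E`-valued Gaussian random variables whose
covariances are dominated, and `φ : E → [0,∞)` is lower semicontinuous, convex
and symmetric, then `Eφ(X₁) ≤ Eφ(X₂)`. -/
theorem stmt14 {Ω₁ Ω₂ E : Type*}
    [MeasureSpace Ω₁] [IsProbabilityMeasure (ℙ : Measure Ω₁)]
    [MeasureSpace Ω₂] [IsProbabilityMeasure (ℙ : Measure Ω₂)]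
    [NormedAddCommGroup E] [NormedSpace ℝ E] [CompleteSpace E]
    (X₁ : Ω₁ → E) (X₂ : Ω₂ → E)
    (hX₁meas : StronglyMeasurable X₁) (hX₂meas : StronglyMeasurable X₂)
    (hX₁gauss : ∀ ψ : E →L[ℝ] ℝ, ∃ v : ℝ≥0,
      Measure.map (fun ω => ψ (X₁ ω)) ℙ = gaussianReal 0 v)
    (hX₂gauss : ∀ ψ : E →L[ℝ] ℝ, ∃ v : ℝ≥0,
      Measure.map (fun ω => ψ (X₂ ω)) ℙ = gaussianReal 0 v)
    (hdom : ∀ ψ : E →L[ℝ] ℝ,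
      (∫ ω, (ψ (X₁ ω)) ^ 2 ∂ℙ) ≤ ∫ ω, (ψ (X₂ ω)) ^ 2 ∂ℙ)
    (φ : E → ℝ) (hφnonneg : ∀ z, 0 ≤ φ z)
    (hφlsc : LowerSemicontinuous φ)
    (hφconv : ConvexOn ℝ Set.univ φ)
    (hφsym : ∀ z, φ (-z) = φ z) :
    (∫⁻ ω, ENNReal.ofReal (φ (X₁ ω)) ∂ℙ) ≤ ∫⁻ ω, ENNReal.ofReal (φ (X₂ ω)) ∂ℙ := by
  obtain ⟨l, c, hl⟩ := aux_affine (Set.range X₁ ∪ Set.range X₂)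
    (hX₁meas.isSeparable_range.union hX₂meas.isSeparable_range) φ hφlsc hφconv
  have hm : ∀ N : ℕ, Measurable fun v : EuclideanSpace ℝ (Fin N) =>
      ⨆ i : Fin N, ENNReal.ofReal (v i + c i) := fun N => by fun_prop
  have key : ∀ N : ℕ, ∫⁻ ω, ⨆ i : Fin N, ENNReal.ofReal (l i (X₁ ω) + c i) ∂ℙ
      ≤ ∫⁻ ω, ⨆ i : Fin N, ENNReal.ofReal (l i (X₂ ω) + c i) ∂ℙ := by
    intro N
    refine aux_fin X₁ X₂ hX₁meas hX₂meas hX₁gauss hX₂gauss hdom (fun i : Fin N => l i)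
      (fun v => ⨆ i : Fin N, ENNReal.ofReal (v i + c i)) (hm N) fun x y => ?_
    rw [ENNReal.mul_iSup]
    refine iSup_le fun i => ?_
    calc 2 * ENNReal.ofReal (x i + c i)
        = ENNReal.ofReal (((x + y) i + c i) + ((x - y) i + c i)) := by
          have h2 : ∀ a : ℝ, 2 * ENNReal.ofReal a = ENNReal.ofReal (2 * a) := fun a => by
            rw [ENNReal.ofReal_mul (by norm_num), ENNReal.ofReal_ofNat]
          rw [h2]
          congr 1
          simp
          ring
      _ ≤ _ := ENNReal.ofReal_add_le
      _ ≤ _ := add_le_add (le_iSup (fun i : Fin N => ENNReal.ofReal ((x + y) i + c i)) i)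
          (le_iSup (fun i : Fin N => ENNReal.ofReal ((x - y) i + c i)) i)
  calc ∫⁻ ω, ENNReal.ofReal (φ (X₁ ω)) ∂ℙ
      = ∫⁻ ω, ⨆ N : ℕ, ⨆ i : Fin N, ENNReal.ofReal (l i (X₁ ω) + c i) ∂ℙ := by
        congr with ω
        obtain ⟨h1, h2⟩ := hl (X₁ ω) (by simp)
        exact aux_ofReal h1 h2
    _ = ⨆ N : ℕ, ∫⁻ ω, ⨆ i : Fin N, ENNReal.ofReal (l i (X₁ ω) + c i) ∂ℙ := by
        refine lintegral_iSup (fun N => (hm N).comp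
          (auxProj_meas hX₁meas (fun i : Fin N => l i))) ?_
        intro M N hMN ω
        exact iSup_le fun i => le_iSup (fun i : Fin N => ENNReal.ofReal (l i (X₁ ω) + c i))
          (Fin.castLE hMN i)
    _ ≤ ∫⁻ ω, ENNReal.ofReal (φ (X₂ ω)) ∂ℙ := by
        refine iSup_le fun N => (key N).trans (lintegral_mono fun ω => ?_)
        exact iSup_le fun i => ENNReal.ofReal_le_ofReal ((hl (X₂ ω) (by simp)).1 i)
end
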